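/- arXiv:2111.15371 — 3 statements merged into one kernel-verified Lean document; each statement's English description precedes it below -/
import Mathlib

section
/- Let x, y ∈ M(m,k;ℝ) be matrices whose k columns each sum to zero, with Frobenius norm ‖x‖ = ‖y‖ = 1, such that y xᵀ is symmetric and φ := arccos⟨x,y⟩ ∈ (0,π). Then for every t ∈ [0,1]: (i) the columns of Φ(x,y,t) sum to zero; (ii) for all s, t ∈ [0,1] the matrix Φ(x,y,t) Φ(x,y,s)ᵀ is symmetric; and (iii) the derivative Φ′(x,y,t) = d/dt Φ(x,y,t) satisfies ⟨Φ(x,y,t), Φ′(x,y,t)⟩ = 0 and Φ′(x,y,t) Φ(x,y,t)ᵀ is symmetric, i.e. Φ(x,y,·) is a horizontal curve in the pre-shape sphere. -/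
open Real Matrix

noncomputable section

attribute [local instance] Matrix.frobeniusNormedAddCommGroup Matrix.frobeniusNormedSpace

/-- Frobenius inner product `⟨x,y⟩ = tr(x yᵀ)` on real `m × k` matrices. -/
def fip {m k : ℕ} (x y : Matrix (Fin m) (Fin k) ℝ) : ℝ := Matrix.trace (x * yᵀ)

/-- The columns of `x` sum to the zero vector (centered landmark configuration). -/
def centered {m k : ℕ} (x : Matrix (Fin m) (Fin k) ℝ) : Prop :=
  ∀ i : Fin m, ∑ j : Fin k, x i j = 0

/-- Spherical linear interpolation (slerp) of matrices with respect to the Frobenius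
inner product: `Φ(x,y,t) = (sin((1−t)φ)/sin φ) x + (sin(tφ)/sin φ) y`, `φ = arccos⟨x,y⟩`. -/
def mSlerp {m k : ℕ} (x y : Matrix (Fin m) (Fin k) ℝ) (t : ℝ) : Matrix (Fin m) (Fin k) ℝ :=
  (Real.sin ((1 - t) * Real.arccos (fip x y)) / Real.sin (Real.arccos (fip x y))) • x +
    (Real.sin (t * Real.arccos (fip x y)) / Real.sin (Real.arccos (fip x y))) • y

theorem fip_self_of_norm {m k : ℕ} (x : Matrix (Fin m) (Fin k) ℝ) (hx : ‖x‖ = 1) :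
    fip x x = 1 := by
  rw [Matrix.frobenius_norm_def] at hx
  have h0 : 0 ≤ ∑ i, ∑ j, ‖x i j‖ ^ (2 : ℝ) := by positivity
  have h1 : ∑ i, ∑ j, ‖x i j‖ ^ (2 : ℝ) = 1 := by
    rw [← Real.sqrt_eq_rpow] at hx
    exact Real.sqrt_eq_one.mp hx
  rw [← h1]
  simp [fip, Matrix.trace, Matrix.mul_apply, pow_two]

theorem fip_symm {m k : ℕ} (x y : Matrix (Fin m) (Fin k) ℝ) : fip y x = fip x y := by
  unfold fip
  rw [← Matrix.trace_transpose, Matrix.transpose_mul, Matrix.transpose_transpose]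

theorem fip_comb {m k : ℕ} (x y : Matrix (Fin m) (Fin k) ℝ) (a b c d : ℝ) :
    fip (a • x + b • y) (c • x + d • y) =
      a * c * fip x x + (a * d + b * c) * fip x y + b * d * fip y y := by
  have h := fip_symm x y
  unfold fip at *
  simp only [Matrix.transpose_add, Matrix.transpose_smul, Matrix.add_mul, Matrix.mul_add,
    Matrix.smul_mul, Matrix.mul_smul, Matrix.trace_add, Matrix.trace_smul, smul_eq_mul, h]
  ring

theorem symm_comb {m k : ℕ} (x y : Matrix (Fin m) (Fin k) ℝ) (hsym : (y * xᵀ).IsSymm)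
    (a b c d : ℝ) : ((a • x + b • y) * (c • x + d • y)ᵀ).IsSymm := by
  have h : x * yᵀ = y * xᵀ := by
    have := hsym.eq
    rwa [Matrix.transpose_mul, Matrix.transpose_transpose] at this
  unfold Matrix.IsSymm
  simp only [Matrix.transpose_add, Matrix.transpose_smul, Matrix.add_mul, Matrix.mul_add,
    Matrix.smul_mul, Matrix.mul_smul, Matrix.transpose_mul, Matrix.transpose_transpose, h]

theorem stmt1 {m k : ℕ} (x y : Matrix (Fin m) (Fin k) ℝ)
    (hxc : centered x) (hyc : centered y)
    (hx : ‖x‖ = 1) (hy : ‖y‖ = 1)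
    (hsym : (y * xᵀ).IsSymm)
    (hφ0 : 0 < Real.arccos (fip x y)) (hφπ : Real.arccos (fip x y) < Real.pi) :
    (∀ t ∈ Set.Icc (0 : ℝ) 1, centered (mSlerp x y t)) ∧
      (∀ s ∈ Set.Icc (0 : ℝ) 1, ∀ t ∈ Set.Icc (0 : ℝ) 1,
        (mSlerp x y t * (mSlerp x y s)ᵀ).IsSymm) ∧
      (∃ Φ' : ℝ → Matrix (Fin m) (Fin k) ℝ,
        (∀ t : ℝ, HasDerivAt (fun τ => mSlerp x y τ) (Φ' t) t) ∧
        (∀ t ∈ Set.Icc (0 : ℝ) 1,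
          fip (mSlerp x y t) (Φ' t) = 0 ∧ (Φ' t * (mSlerp x y t)ᵀ).IsSymm)) := by
  refine ⟨?_, ?_, ?_⟩
  · intro t _ i
    simp only [mSlerp, Matrix.add_apply, Matrix.smul_apply, smul_eq_mul, Finset.sum_add_distrib,
      ← Finset.mul_sum, hxc i, hyc i, mul_zero, add_zero]
  · intro s _ t _
    exact symm_comb x y hsym _ _ _ _
  · have hc : Real.cos (Real.arccos (fip x y)) = fip x y := by
      apply Real.cos_arccos
      · by_contra hlt
        rw [Real.arccos_of_le_neg_one (by linarith)] at hφπ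
        exact lt_irrefl _ hφπ
      · exact (Real.arccos_pos.mp hφ0).le
    have hS := Real.sin_pos_of_pos_of_lt_pi hφ0 hφπ
    have hxx := fip_self_of_norm x hx
    have hyy := fip_self_of_norm y hy
    unfold mSlerp
    set φ := Real.arccos (fip x y) with hφ
    refine ⟨fun t => (Real.cos ((1 - t) * φ) * (-φ) / Real.sin φ) • x +
      (Real.cos (t * φ) * φ / Real.sin φ) • y, ?_, ?_⟩
    · intro t
      have h1 : HasDerivAt (fun τ : ℝ => (1 - τ) * φ) (-φ) t := by
        simpa using ((hasDerivAt_id t).const_sub 1).mul_const φ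
      have h2 : HasDerivAt (fun τ : ℝ => τ * φ) φ t := by
        simpa using (hasDerivAt_id t).mul_const φ
      exact ((h1.sin.div_const _).smul_const x).add ((h2.sin.div_const _).smul_const y)
    · intro t _
      refine ⟨?_, symm_comb x y hsym _ _ _ _⟩
      rw [fip_comb, hxx, hyy, ← hc]
      have e : (1 - t) * φ = φ - t * φ := by ring
      rw [e, Real.sin_sub, Real.cos_sub]
      have hS' := hS.ne'
      have p1 := Real.sin_sq_add_cos_sq φ
      have p2 := Real.sin_sq_add_cos_sq (t * φ)
      generalize Real.sin φ = S at *
      generalize Real.cos φ = C at *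
      generalize Real.sin (t * φ) = a at *
      generalize Real.cos (t * φ) = b at *
      field_simp
      have : C ^ 2 = 1 - S ^ 2 := by linarith
      grind

end
end

section
/- For every A ∈ M(m,m;ℝ) there exists R ∈ SO(m) maximizing the function Q ↦ tr(QA) over SO(m), and for every such maximizer R the matrix RA is symmetric. Consequently, for any two pre-shapes x, y there exists R ∈ SO(m) such that (Ry) xᵀ is symmetric and arccos⟨x, Ry⟩ = min over Q ∈ SO(m) of arccos⟨x, Qy⟩, i.e. x and Ry are well positioned. -/
open Real Matrix

noncomputable section

/-- The special orthogonal group `SO(m)` as a set of `m × m` real matrices. -/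
def SOset (m : ℕ) : Set (Matrix (Fin m) (Fin m) ℝ) := {R | Rᵀ * R = 1 ∧ R.det = 1}

/-- The pre-shape space: centered configurations of unit Frobenius norm. -/
def isPreShape {m k : ℕ} (x : Matrix (Fin m) (Fin k) ℝ) : Prop :=
  (∀ i : Fin m, ∑ j : Fin k, x i j = 0) ∧ Real.sqrt (fip x x) = 1

open NormedSpace in
lemma exp_skew_orth {m : ℕ} (S : Matrix (Fin m) (Fin m) ℝ) (hS : Sᵀ = -S) :
    (exp S)ᵀ * exp S = 1 := by
  rw [← Matrix.exp_transpose, hS, ← Matrix.exp_add_of_commute _ _ (Commute.neg_left (Commute.refl S))]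
  simp

open NormedSpace in
lemma exp_skew_mem {m : ℕ} (S : Matrix (Fin m) (Fin m) ℝ) (hS : Sᵀ = -S) :
    exp S ∈ SOset m := by
  refine ⟨exp_skew_orth S hS, ?_⟩
  have h2 : (exp ((1/2 : ℝ) • S))ᵀ * exp ((1/2 : ℝ) • S) = 1 :=
    exp_skew_orth _ (by rw [Matrix.transpose_smul, hS, smul_neg])
  have h3 : exp S = exp ((1/2 : ℝ) • S) * exp ((1/2 : ℝ) • S) := by
    rw [← Matrix.exp_add_of_commute _ _ rfl, ← add_smul]
    norm_num
  have h4 := congrArg Matrix.det h2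
  rw [Matrix.det_mul, Matrix.det_transpose, Matrix.det_one] at h4
  rw [h3, Matrix.det_mul, h4]

lemma SOset_mul {m : ℕ} {Q R : Matrix (Fin m) (Fin m) ℝ} (hQ : Q ∈ SOset m) (hR : R ∈ SOset m) :
    Q * R ∈ SOset m := by
  refine ⟨?_, by rw [Matrix.det_mul, hQ.2, hR.2, one_mul]⟩
  rw [Matrix.transpose_mul, Matrix.mul_assoc, ← Matrix.mul_assoc Qᵀ, hQ.1, Matrix.one_mul, hR.1]

lemma SOset_compact (m : ℕ) : IsCompact (SOset m) := by
  have hK : IsCompact {M : Matrix (Fin m) (Fin m) ℝ | ∀ i, M i ∈ {v : Fin m → ℝ | ∀ j, v j ∈ Set.Icc (-1 : ℝ) 1}} :=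
    isCompact_pi_infinite fun i => isCompact_pi_infinite fun j => isCompact_Icc
  refine hK.of_isClosed_subset ?_ ?_
  · have h1 : IsClosed {R : Matrix (Fin m) (Fin m) ℝ | Rᵀ * R = 1} :=
      isClosed_eq (by fun_prop) continuous_const
    have h2 : IsClosed {R : Matrix (Fin m) (Fin m) ℝ | R.det = 1} :=
      isClosed_eq (by fun_prop) continuous_const
    exact h1.inter h2
  · intro R hR i j
    have := entry_norm_bound_of_unitary (𝕜 := ℝ) (U := R)
      (Matrix.mem_unitaryGroup_iff'.2 hR.1) i j
    rw [Real.norm_eq_abs, abs_le] at this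
    exact this

lemma exists_max {m : ℕ} (A : Matrix (Fin m) (Fin m) ℝ) :
    ∃ R ∈ SOset m, ∀ Q ∈ SOset m, (Q * A).trace ≤ (R * A).trace := by
  obtain ⟨R, hR, h⟩ := (SOset_compact m).exists_isMaxOn (f := fun Q => (Q * A).trace)
    ⟨1, by simp [SOset]⟩ (by fun_prop)
  exact ⟨R, hR, fun Q hQ => h hQ⟩

section
attribute [local instance] Matrix.linftyOpNormedRing Matrix.linftyOpNormedAlgebra

open NormedSpace in
lemma trace_skew_zero {m : ℕ} (B S : Matrix (Fin m) (Fin m) ℝ) (hS : Sᵀ = -S)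
    (h : ∀ Q ∈ SOset m, (Q * B).trace ≤ B.trace) : (S * B).trace = 0 := by
  have hd : HasDerivAt (fun u : ℝ => exp (u • S)) (exp ((0 : ℝ) • S) * S) 0 :=
    hasDerivAt_exp_smul_const S 0
  let L : Matrix (Fin m) (Fin m) ℝ →L[ℝ] ℝ :=
    LinearMap.toContinuousLinearMap
      ((Matrix.traceLinearMap (Fin m) ℝ ℝ).comp (LinearMap.mulRight ℝ B))
  have hL : ∀ X, L X = (X * B).trace := fun X => rfl
  have h1 := L.hasFDerivAt.comp_hasDerivAt (0 : ℝ) hd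
  have hmax : IsLocalMax (L ∘ fun u : ℝ => exp (u • S)) 0 := by
    refine Filter.Eventually.of_forall fun u => ?_
    simp only [Function.comp, hL, zero_smul, NormedSpace.exp_zero, Matrix.one_mul]
    exact h _ (exp_skew_mem _ (by rw [Matrix.transpose_smul u S, hS, smul_neg]))
  have h2 := hmax.hasDerivAt_eq_zero h1
  rw [zero_smul, NormedSpace.exp_zero, one_mul] at h2
  exact h2

end

lemma symm_of_max {m : ℕ} (A R : Matrix (Fin m) (Fin m) ℝ) (hR : R ∈ SOset m)
    (h : ∀ Q ∈ SOset m, (Q * A).trace ≤ (R * A).trace) : (R * A).IsSymm := by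
  set B := R * A with hB
  have h0 := trace_skew_zero B (Bᵀ - B) (by simp) (fun Q hQ => by
    rw [hB, ← Matrix.mul_assoc]; exact h _ (SOset_mul hQ hR))
  have h1 : ((Bᵀ - B)ᴴ * (Bᵀ - B)).trace = 0 := by
    rw [Matrix.conjTranspose_eq_transpose_of_trivial]
    rw [Matrix.sub_mul, Matrix.trace_sub] at h0
    have h2 : (Bᵀ * Bᵀ).trace = (B * B).trace := by
      rw [← Matrix.transpose_mul, Matrix.trace_transpose]
    have h3 := Matrix.trace_mul_comm B Bᵀ
    simp only [Matrix.transpose_sub, Matrix.transpose_transpose, Matrix.sub_mul, Matrix.mul_sub,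
      Matrix.trace_sub]
    linarith
  exact sub_eq_zero.1 (Matrix.trace_conjTranspose_mul_self_eq_zero_iff.1 h1)

theorem stmt2 (m k : ℕ) :
    (∀ A : Matrix (Fin m) (Fin m) ℝ,
      ∃ R ∈ SOset m, ∀ Q ∈ SOset m, (Q * A).trace ≤ (R * A).trace) ∧
    (∀ A R : Matrix (Fin m) (Fin m) ℝ, R ∈ SOset m →
      (∀ Q ∈ SOset m, (Q * A).trace ≤ (R * A).trace) → (R * A).IsSymm) ∧
    (∀ x y : Matrix (Fin m) (Fin k) ℝ, isPreShape x → isPreShape y →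
      ∃ R ∈ SOset m, ((R * y) * xᵀ).IsSymm ∧
        ∀ Q ∈ SOset m, Real.arccos (fip x (R * y)) ≤ Real.arccos (fip x (Q * y))) := by
  refine ⟨exists_max, symm_of_max, fun x y _ _ => ?_⟩
  obtain ⟨R, hR, h⟩ := exists_max (y * xᵀ)
  refine ⟨R, hR, ?_, fun Q hQ => Real.arccos_le_arccos ?_⟩
  · rw [Matrix.mul_assoc]
    exact symm_of_max _ R hR h
  · have key : ∀ P : Matrix (Fin m) (Fin m) ℝ, fip x (P * y) = (P * (y * xᵀ)).trace := by
      intro P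
      rw [fip, ← Matrix.trace_transpose, Matrix.transpose_mul, Matrix.transpose_transpose,
        Matrix.mul_assoc]
    rw [key, key]
    exact h Q hQ

end
end

section
/- Let 2 ≤ m ≤ k, let V = {x ∈ M(m,k;ℝ) : the k columns of x sum to zero}, and let S = {x ∈ V : ‖x‖ = 1} be the pre-shape sphere with its subspace topology. Then the set {x ∈ S : rank x ≥ m − 1} is open and dense in S. -/
open Matrix

noncomputable section

/-- The pre-shape sphere `S = {x ∈ V : ‖x‖ = 1}` (Frobenius norm) inside the space `V`
of centered configurations, carrying the subspace topology. -/
def preSphere (m k : ℕ) : Type :=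
  {x : Matrix (Fin m) (Fin k) ℝ // centered x ∧ Real.sqrt (fip x x) = 1}

instance (m k : ℕ) : TopologicalSpace (preSphere m k) :=
  instTopologicalSpaceSubtype

lemma isOpen_rank_ge (m k n : ℕ) :
    IsOpen {x : Matrix (Fin m) (Fin k) ℝ | n ≤ x.rank} := by
  let L : Matrix (Fin m) (Fin k) ℝ →ₗ[ℝ] ((Fin k → ℝ) →L[ℝ] (Fin m → ℝ)) :=
    (LinearMap.toContinuousLinearMap (𝕜 := ℝ) (E := Fin k → ℝ) (F' := Fin m → ℝ)).toLinearMap ∘ₗ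
      (Matrix.toLin' (R := ℝ) (m := Fin m) (n := Fin k)).toLinearMap
  have hL : Continuous L := L.continuous_of_finiteDimensional
  have h := (isOpen_setOfPred_nat_le_rank
    (𝕜 := ℝ) (E := Fin k → ℝ) (F := Fin m → ℝ) n).preimage hL
  convert h using 1
  ext x
  have : ((L x : (Fin k → ℝ) →L[ℝ] (Fin m → ℝ)) : (Fin k → ℝ) →ₗ[ℝ] (Fin m → ℝ))
      = x.mulVecLin := by
    ext; simp [L]
  simp only [Set.mem_ofPred_eq, Set.mem_preimage, this]
  rw [LinearMap.rank, Matrix.rank, ← Module.finrank_eq_rank]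
  exact Nat.cast_le.symm

lemma fip_self_eq {m k : ℕ} (x : Matrix (Fin m) (Fin k) ℝ) :
    fip x x = ∑ i, ∑ j, x i j ^ 2 := by
  simp [fip, Matrix.trace, Matrix.mul_apply, pow_two]

lemma fip_smul_self {m k : ℕ} (c : ℝ) (x : Matrix (Fin m) (Fin k) ℝ) :
    fip (c • x) (c • x) = c ^ 2 * fip x x := by
  simp [fip_self_eq, mul_pow, Finset.mul_sum]

/-- A centered matrix whose top-left `n × n` block is the identity. -/
lemma exists_ref (n m k : ℕ) (hm : n ≤ m) (hk : n < k) :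
    ∃ y : Matrix (Fin m) (Fin k) ℝ, centered y ∧
      y.submatrix (Fin.castLE hm) (Fin.castLE hk.le) = 1 := by
  refine ⟨Matrix.of fun i j => (if (j : ℕ) = i then 1 else 0) -
    (if (j : ℕ) = if (i : ℕ) < n then n else i then 1 else 0), ?_, ?_⟩
  · intro i
    simp only [Matrix.of_apply]
    rw [Finset.sum_sub_distrib, sub_eq_zero]
    by_cases hi : (i : ℕ) < n
    · have h1 : ∀ j : Fin k, ((j : ℕ) = i) = (j = ⟨i, hi.trans hk⟩) := by
        intro j; simp [Fin.ext_iff]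
      have h2 : ∀ j : Fin k, ((j : ℕ) = n) = (j = ⟨n, hk⟩) := by
        intro j; simp [Fin.ext_iff]
      simp [hi, h1, h2]
    · simp [hi]
  · ext i j
    have hj : ¬ ((j : ℕ) = n) := j.2.ne
    rw [Matrix.submatrix_apply, Matrix.of_apply]
    simp [Matrix.one_apply, Fin.ext_iff, hj, eq_comm]

lemma rank_ge_eventually {n m k : ℕ} (hm : n ≤ m) (hk : n ≤ k)
    (x y : Matrix (Fin m) (Fin k) ℝ)
    (hy : y.submatrix (Fin.castLE hm) (Fin.castLE hk) = 1) :
    ∀ᶠ t in nhdsWithin (0 : ℝ) {0}ᶜ, n ≤ (x + t • y).rank := by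
  set A := x.submatrix (Fin.castLE hm) (Fin.castLE hk) with hA
  have hfin : {t : ℝ | (-A).charpoly.IsRoot t}.Finite :=
    Polynomial.finite_setOfPred_isRoot (Matrix.charpoly_monic _).ne_zero
  have := nhdsNE_le_cofinite (0 : ℝ) hfin.compl_mem_cofinite
  filter_upwards [this] with t ht
  have ht' : (-A).charpoly.eval t ≠ 0 := ht
  rw [Matrix.eval_charpoly] at ht'
  have e : (x + t • y).submatrix (Fin.castLE hm) (Fin.castLE hk)
      = Matrix.scalar (Fin n) t - -A := by
    have : (x + t • y).submatrix (Fin.castLE hm) (Fin.castLE hk)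
      = A + t • y.submatrix (Fin.castLE hm) (Fin.castLE hk) := rfl
    rw [this, hy, sub_neg_eq_add, add_comm, Matrix.smul_one_eq_diagonal]
    rfl
  have h1 := Matrix.rank_of_det_ne_zero ht'
  rw [← e, Fintype.card_fin] at h1
  calc n = _ := h1.symm
    _ ≤ _ := Matrix.rank_submatrix_le _ _ _

theorem stmt6 (m k : ℕ) (hm : 2 ≤ m) (hk : m ≤ k) :
    IsOpen {x : preSphere m k | m - 1 ≤ (x.1).rank} ∧
      Dense {x : preSphere m k | m - 1 ≤ (x.1).rank} := by
  refine ⟨(isOpen_rank_ge m k (m - 1)).preimage continuous_subtype_val, ?_⟩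
  intro x
  obtain ⟨y, hyc, hy⟩ := exists_ref (m - 1) m k (by omega) (by omega)
  have hind : Topology.IsInducing (fun z : preSphere m k => z.1) :=
    Topology.IsInducing.subtypeVal
  rw [hind.closure_eq_preimage_closure_image, Set.mem_preimage]
  have hx1 : fip x.1 x.1 = 1 := by
    have := x.2.2
    rwa [Real.sqrt_eq_one] at this
  have hcont : Continuous fun t : ℝ => fip (x.1 + t • y) (x.1 + t • y) := by
    simp only [fip_self_eq, Matrix.add_apply, Matrix.smul_apply]
    fun_prop
  have hpos : ∀ᶠ t in nhdsWithin (0 : ℝ) {0}ᶜ, 0 < fip (x.1 + t • y) (x.1 + t • y) := by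
    apply nhdsWithin_le_nhds
    apply hcont.continuousAt.eventually_const_lt
    simp [hx1]
  have htend : Filter.Tendsto
      (fun t : ℝ => (Real.sqrt (fip (x.1 + t • y) (x.1 + t • y)))⁻¹ • (x.1 + t • y))
      (nhdsWithin (0 : ℝ) {0}ᶜ) (nhds x.1) := by
    have hc : ContinuousAt
        (fun t : ℝ => (Real.sqrt (fip (x.1 + t • y) (x.1 + t • y)))⁻¹ • (x.1 + t • y)) 0 := by
      have h1 : ContinuousAt (fun t : ℝ => (Real.sqrt (fip (x.1 + t • y) (x.1 + t • y)))⁻¹) 0 := by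
        apply ContinuousAt.inv₀ (Real.continuous_sqrt.comp hcont).continuousAt
        simp [hx1]
      have h2 : ContinuousAt (fun t : ℝ => x.1 + t • y) 0 := by fun_prop
      exact h1.smul h2
    have := hc.tendsto
    simp only [zero_smul, add_zero, hx1, Real.sqrt_one, inv_one, one_smul] at this
    exact this.mono_left nhdsWithin_le_nhds
  refine mem_closure_of_tendsto htend ?_
  filter_upwards [hpos, rank_ge_eventually _ _ x.1 y hy] with t ht hr
  have hs : 0 < Real.sqrt (fip (x.1 + t • y) (x.1 + t • y)) := Real.sqrt_pos.2 ht
  refine ⟨⟨_, ?_, ?_⟩, ?_, rfl⟩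
  · intro i
    have h1 : ∑ j, x.1 i j = 0 := x.2.1 i
    have h2 := hyc i
    simp only [Matrix.smul_apply, Matrix.add_apply, smul_eq_mul]
    rw [← Finset.mul_sum, Finset.sum_add_distrib, ← Finset.mul_sum, h1, h2]
    simp
  · rw [fip_smul_self, inv_pow, Real.sq_sqrt ht.le, inv_mul_cancel₀ ht.ne', Real.sqrt_one]
  · change m - 1 ≤ Matrix.rank _
    rw [Matrix.rank_smul_of_mem_nonZeroDivisors _
      (mem_nonZeroDivisors_of_ne_zero (inv_ne_zero hs.ne'))]
    exact hr

end
end
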